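/- For every nonnegative integer n, ped(9n + 7) ≡ 0 (mod 12). -/

import Mathlib

/-- `ped n` is the number of partitions of `n` in which the even parts are
distinct (and the odd parts are unrestricted). -/
def ped (n : ℕ) : ℕ :=
  Fintype.card {p : n.Partition // ∀ x ∈ p.parts, Even x → p.parts.count x ≤ 1}

section GeneratingFunctions

open PowerSeries Finset.HasAntidiagonal

/-- The generating series `∑ i, X ^ f i`, counting the indices at which `f` takes each natural
value. -/
noncomputable def countSeries {ι : Type*} (f : ι → ℤ) : ℤ⟦X⟧ :=
  PowerSeries.mk fun n ↦ (Nat.card {i // f i = n} : ℤ)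

/-- `f` is nonnegative and takes each value finitely often. -/
def NonnegProper {ι : Type*} (f : ι → ℤ) : Prop :=
  (∀ i, 0 ≤ f i) ∧ ∀ n : ℕ, Finite {i // f i = n}

theorem nonnegProper_of_abs_le {f : ℤ → ℤ} (hf : ∀ i, 0 ≤ f i) (h : ∀ i, |i| ≤ f i + 1) :
    NonnegProper f := by
  refine ⟨hf, fun n ↦ Set.Finite.subset (Set.finite_Icc (-(n + 1 : ℤ)) (n + 1)) ?_⟩
  intro i hi
  have h1 := abs_le.mp (h i)
  rw [show f i = n from hi] at h1
  exact ⟨h1.1, h1.2⟩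

namespace NonnegProper

variable {ι κ : Type*} {f : ι → ℤ} {g : κ → ℤ}

theorem comp_equiv (hf : NonnegProper f) (e : κ ≃ ι) : NonnegProper fun k ↦ f (e k) :=
  ⟨fun _ ↦ hf.1 _, fun n ↦ by
    have := hf.2 n
    exact Finite.of_injective (β := {i // f i = n}) (fun k ↦ ⟨e k.1, k.2⟩)
      fun a b h ↦ by simpa [Subtype.ext_iff] using h⟩

theorem const_mul (hf : NonnegProper f) {m : ℕ} (hm : m ≠ 0) :
    NonnegProper fun i ↦ m * f i := by
  refine ⟨fun i ↦ mul_nonneg (by positivity) (hf.1 i), fun n ↦ ?_⟩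
  by_cases h : m ∣ n
  · obtain ⟨k, rfl⟩ := h
    have (i : ι) : (m : ℤ) * f i = ((m * k : ℕ) : ℤ) ↔ f i = k := by
      push_cast
      exact mul_right_inj' (by exact_mod_cast hm)
    simp only [this]
    exact hf.2 k
  · have : IsEmpty {i // (m : ℤ) * f i = n} :=
      ⟨fun i ↦ h (Int.natCast_dvd_natCast.mp ⟨_, i.2.symm⟩)⟩
    infer_instance

/-- Fibers of `f + g` on a product, sorted by the values of `f` and `g`. -/
def fiberEquiv (hf : NonnegProper f) (hg : NonnegProper g) (n : ℕ) :
    {p : ι × κ // f p.1 + g p.2 = n} ≃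
      Σ a : antidiagonal n, {i // f i = a.1.1} × {k // g k = a.1.2} where
  toFun p := ⟨⟨((f p.1.1).toNat, (g p.1.2).toNat), by
      have h1 := hf.1 p.1.1
      have h2 := hg.1 p.1.2
      have h3 := p.2
      rw [mem_antidiagonal]
      dsimp only
      lia⟩, ⟨p.1.1, (Int.toNat_of_nonneg (hf.1 _)).symm⟩,
        ⟨p.1.2, (Int.toNat_of_nonneg (hg.1 _)).symm⟩⟩
  invFun s := ⟨(s.2.1.1, s.2.2.1), by
    rw [s.2.1.2, s.2.2.2]
    exact_mod_cast mem_antidiagonal.mp s.1.2⟩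
  left_inv _ := rfl
  right_inv := by
    rintro ⟨⟨⟨a, b⟩, h⟩, ⟨i, hi⟩, ⟨k, hk⟩⟩
    dsimp only at hi hk
    obtain rfl : (f i).toNat = a := by lia
    obtain rfl : (g k).toNat = b := by lia
    rfl

theorem add_prod (hf : NonnegProper f) (hg : NonnegProper g) :
    NonnegProper fun p : ι × κ ↦ f p.1 + g p.2 := by
  refine ⟨fun p ↦ add_nonneg (hf.1 _) (hg.1 _), fun n ↦ ?_⟩
  have (a : antidiagonal n) : Finite ({i // f i = a.1.1} × {k // g k = a.1.2}) := by
    have := hf.2 a.1.1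
    have := hg.2 a.1.2
    infer_instance
  exact Finite.of_equiv _ (hf.fiberEquiv hg n).symm

end NonnegProper

namespace countSeries

variable {ι κ : Type*}

theorem comp_equiv (e : κ ≃ ι) (f : ι → ℤ) : countSeries (fun k ↦ f (e k)) = countSeries f := by
  ext n
  simp only [countSeries, coeff_mk, Nat.cast_inj]
  exact Nat.card_congr (e.subtypeEquiv fun _ ↦ Iff.rfl)

theorem eq_of_equiv {f : ι → ℤ} {g : κ → ℤ} (e : κ ≃ ι) (h : ∀ k, f (e k) = g k) :
    countSeries f = countSeries g := by
  rw [← comp_equiv e f]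
  simp only [h]

theorem prod_fin {m : ℕ} (f : κ × Fin m → ℤ) (hf : ∀ n : ℕ, Finite {i // f i = n}) :
    countSeries f = ∑ c, countSeries fun k ↦ f (k, c) := by
  ext n
  simp only [countSeries, coeff_mk, map_sum]
  have e : {i // f i = n} ≃ Σ c : Fin m, {k // f (k, c) = n} :=
    { toFun := fun i ↦ ⟨i.1.2, i.1.1, i.2⟩
      invFun := fun i ↦ ⟨(i.2.1, i.1), i.2.2⟩
      left_inv := fun _ ↦ rfl
      right_inv := fun _ ↦ rfl }
  have (c : Fin m) : Finite {k // f (k, c) = n} :=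
    Finite.of_injective (β := {i // f i = n}) (fun k ↦ ⟨(k.1, c), k.2⟩)
      fun a b h ↦ by simpa [Subtype.ext_iff] using h
  rw [Nat.card_congr e, Nat.card_sigma]
  push_cast
  rfl

theorem sum_type (f : ι ⊕ κ → ℤ) (hf : ∀ n : ℕ, Finite {i // f i = n}) :
    countSeries f = countSeries (fun i ↦ f (.inl i)) + countSeries (fun k ↦ f (.inr k)) := by
  ext n
  simp only [countSeries, coeff_mk, map_add]
  have h1 : Finite {i // f (.inl i) = n} :=
    Finite.of_injective (β := {i // f i = n}) (fun k ↦ ⟨.inl k.1, k.2⟩)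
      fun a b h ↦ by simpa [Subtype.ext_iff] using h
  have h2 : Finite {i // f (.inr i) = n} :=
    Finite.of_injective (β := {i // f i = n}) (fun k ↦ ⟨.inr k.1, k.2⟩)
      fun a b h ↦ by simpa [Subtype.ext_iff] using h
  rw [Nat.card_congr (Equiv.subtypeSum), Nat.card_sum]
  push_cast
  rfl

theorem mul_eq {f : ι → ℤ} {g : κ → ℤ} (hf : NonnegProper f) (hg : NonnegProper g) :
    countSeries f * countSeries g = countSeries fun p : ι × κ ↦ f p.1 + g p.2 := by
  ext n
  simp only [countSeries, coeff_mk, coeff_mul]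
  have (a : antidiagonal n) : Finite ({i // f i = a.1.1} × {k // g k = a.1.2}) := by
    have := hf.2 a.1.1
    have := hg.2 a.1.2
    infer_instance
  rw [Nat.card_congr (hf.fiberEquiv hg n), Nat.card_sigma]
  simp only [Nat.card_prod]
  rw [Finset.sum_coe_sort (antidiagonal n)
    (fun a ↦ Nat.card {i // f i = a.1} * Nat.card {k // g k = a.2})]
  push_cast
  rfl

theorem expand_eq {m : ℕ} (hm : m ≠ 0) (f : ι → ℤ) :
    expand m hm (countSeries f) = countSeries fun i ↦ m * f i := by
  ext n
  rw [coeff_expand]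
  simp only [countSeries, coeff_mk]
  split_ifs with h
  · obtain ⟨k, rfl⟩ := h
    rw [Nat.mul_div_cancel_left _ (Nat.pos_of_ne_zero hm)]
    have (i : ι) : (m : ℤ) * f i = ((m * k : ℕ) : ℤ) ↔ f i = k := by
      push_cast
      exact mul_right_inj' (by exact_mod_cast hm)
    simp only [this]
  · have : IsEmpty {i // (m : ℤ) * f i = n} :=
      ⟨fun i ↦ h (Int.natCast_dvd_natCast.mp ⟨_, i.2.symm⟩)⟩
    simp

theorem X_pow_mul_eq (c : ℕ) {f : ι → ℤ} (hf : NonnegProper f) :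
    X ^ c * countSeries f = countSeries fun i ↦ f i + c := by
  ext n
  rw [coeff_X_pow_mul']
  simp only [countSeries, coeff_mk]
  split_ifs with h
  · have (i : ι) : f i + c = n ↔ f i = ((n - c : ℕ) : ℤ) := by lia
    simp only [this]
  · have : IsEmpty {i // f i + c = n} := ⟨fun i ↦ by have := hf.1 i.1; have := i.2; lia⟩
    simp

theorem int_split (m : ℕ) [NeZero m] {f : ℤ → ℤ} (hf : NonnegProper f) :
    countSeries f = ∑ c ∈ Finset.range m, countSeries fun k ↦ f (k * m + c) := by
  rw [Finset.sum_range, ← comp_equiv (Int.divModEquiv m).symm f, prod_fin]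
  · rfl
  · exact (hf.comp_equiv _).2

theorem int_prod_split (m : ℕ) [NeZero m] {f : ℤ × κ → ℤ} (hf : NonnegProper f) :
    countSeries f =
      ∑ c ∈ Finset.range m, countSeries fun p : ℤ × κ ↦ f (p.1 * m + c, p.2) := by
  let e : (ℤ × κ) × Fin m ≃ ℤ × κ :=
    { toFun := fun p ↦ ((Int.divModEquiv m).symm (p.1.1, p.2), p.1.2)
      invFun := fun p ↦ (((Int.divModEquiv m p.1).1, p.2), (Int.divModEquiv m p.1).2)
      left_inv := fun p ↦ by dsimp only; rw [Equiv.apply_symm_apply]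
      right_inv := fun p ↦ by dsimp only; rw [Prod.mk.eta, Equiv.symm_apply_apply] }
  rw [Finset.sum_range, ← comp_equiv e f, prod_fin]
  · rfl
  · exact (hf.comp_equiv e).2

end countSeries

theorem nonnegProper_sq : NonnegProper fun x : ℤ ↦ x ^ 2 :=
  nonnegProper_of_abs_le (fun i ↦ sq_nonneg i) fun i ↦ abs_le.mpr ⟨by nlinarith, by nlinarith⟩

theorem nonnegProper_tri : NonnegProper fun k : ℤ ↦ 2 * k ^ 2 + k :=
  nonnegProper_of_abs_le (fun i ↦ by rcases le_or_gt 0 i with h | h <;> nlinarith)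
    fun i ↦ abs_le.mpr ⟨by nlinarith, by nlinarith⟩

theorem nonnegProper_sq_add_self : NonnegProper fun t : ℤ ↦ t ^ 2 + t :=
  nonnegProper_of_abs_le (fun i ↦ by rcases le_or_gt 0 i with h | h <;> nlinarith)
    fun i ↦ abs_le.mpr ⟨by nlinarith, by nlinarith⟩

theorem nonnegProper_omega : NonnegProper fun k : ℤ ↦ 3 * k ^ 2 + 2 * k :=
  nonnegProper_of_abs_le (fun i ↦ by rcases le_or_gt 0 i with h | h <;> nlinarith)
    fun i ↦ abs_le.mpr ⟨by nlinarith, by nlinarith⟩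

theorem nonnegProper_pent₀ : NonnegProper fun k : ℤ ↦ 6 * k ^ 2 - k :=
  nonnegProper_of_abs_le (fun i ↦ by rcases le_or_gt 0 i with h | h <;> nlinarith)
    fun i ↦ abs_le.mpr ⟨by nlinarith, by nlinarith⟩

theorem nonnegProper_pent₁ : NonnegProper fun k : ℤ ↦ 6 * k ^ 2 + 7 * k + 2 :=
  nonnegProper_of_abs_le (fun i ↦ by rcases le_or_gt 0 i with h | h <;> nlinarith)
    fun i ↦ abs_le.mpr ⟨by rcases le_or_gt 0 i with h | h <;> nlinarith, by nlinarith⟩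

/-- Ramanujan's theta function `φ(q) = ∑ q ^ (x ^ 2)`. -/
noncomputable def ramanujanPhi : ℤ⟦X⟧ := countSeries fun x : ℤ ↦ x ^ 2

/-- Ramanujan's theta function `ψ(q) = ∑ q ^ (t (t + 1) / 2)`, the sum running over `t ≥ 0`;
equivalently the sum of `q ^ (k (2 k + 1))` over all integers `k`. -/
noncomputable def ramanujanPsi : ℤ⟦X⟧ := countSeries fun k : ℤ ↦ 2 * k ^ 2 + k

/-- The series `∑ q ^ (3 k ^ 2 + 2 k)` occurring in the 3-dissection of `φ`. -/
noncomputable def phiDissection : ℤ⟦X⟧ := countSeries fun k : ℤ ↦ 3 * k ^ 2 + 2 * k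

/-- The series `∑ q ^ (k (3 k + 1) / 2)` occurring in the 3-dissection of `ψ`. -/
noncomputable def psiDissection : ℤ⟦X⟧ :=
  (countSeries fun k : ℤ ↦ 6 * k ^ 2 - k) + countSeries fun k : ℤ ↦ 6 * k ^ 2 + 7 * k + 2

/-- The reflection `k ↦ c - k` of the integers. -/
abbrev reflect (c : ℤ) : ℤ ≃ ℤ := Equiv.subLeft c

theorem ramanujanPhi_dissection : ramanujanPhi =
    expand 3 three_ne_zero (expand 3 three_ne_zero ramanujanPhi) +
      2 * X * expand 3 three_ne_zero phiDissection := by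
  rw [ramanujanPhi, phiDissection, countSeries.expand_eq, countSeries.expand_eq,
    countSeries.expand_eq, mul_assoc, ← pow_one (X : ℤ⟦X⟧),
    countSeries.X_pow_mul_eq 1 (nonnegProper_omega.const_mul three_ne_zero),
    countSeries.int_split 3 nonnegProper_sq, Finset.sum_range_succ, Finset.sum_range_succ,
    Finset.sum_range_one, add_assoc, two_mul]
  congr 1
  · congr 1; funext k; push_cast; ring
  · congr 1
    · congr 1; funext k; push_cast; ring
    · exact countSeries.eq_of_equiv (reflect (-1)) fun k ↦ by simp; ring

theorem ramanujanPsi_dissection : ramanujanPsi =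
    expand 3 three_ne_zero psiDissection +
      X * expand 3 three_ne_zero (expand 3 three_ne_zero ramanujanPsi) := by
  rw [ramanujanPsi, psiDissection, map_add]
  simp only [countSeries.expand_eq]
  rw [← pow_one (X : ℤ⟦X⟧), countSeries.X_pow_mul_eq 1
    ((nonnegProper_tri.const_mul three_ne_zero).const_mul three_ne_zero),
    countSeries.int_split 3 nonnegProper_tri, Finset.sum_range_succ, Finset.sum_range_succ,
    Finset.sum_range_one, add_assoc, add_assoc]
  congr 1
  · exact countSeries.eq_of_equiv (reflect 0) fun k ↦ by simp; ring
  congr 1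
  · exact countSeries.eq_of_equiv (reflect (-1)) fun k ↦ by simp; ring
  · exact countSeries.eq_of_equiv (reflect (-1)) fun k ↦ by simp; ring

theorem countSeries_sq_add_self :
    countSeries (fun t : ℤ ↦ t ^ 2 + t) = 2 * expand 2 two_ne_zero ramanujanPsi := by
  rw [ramanujanPsi, countSeries.expand_eq, countSeries.int_split 2 nonnegProper_sq_add_self,
    Finset.sum_range_succ, Finset.sum_range_one, two_mul]
  congr 1
  · congr 1; funext k; push_cast; simp; ring
  · exact countSeries.eq_of_equiv (reflect (-1)) fun k ↦ by simp; ring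

/-- The shear `(v, y) ↦ (v, ε y + m v + c)` of `ℤ × ℤ`, with a sign `ε`. -/
def shear (m c : ℤ) (ε : ℤˣ) : ℤ × ℤ ≃ ℤ × ℤ where
  toFun p := (p.1, ε * p.2 + m * p.1 + c)
  invFun p := (p.1, ε * (p.2 - m * p.1 - c))
  left_inv p := by
    rcases Int.units_eq_one_or ε with rfl | rfl <;> ext <;> simp <;> ring
  right_inv p := by
    rcases Int.units_eq_one_or ε with rfl | rfl <;> ext <;> simp <;> ring

/-- The map `(w, t) ↦ (w + t, t)` on `ℤ × ℤ`. -/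
def addSnd : ℤ × ℤ ≃ ℤ × ℤ where
  toFun p := (p.1 + p.2, p.2)
  invFun p := (p.1 - p.2, p.2)
  left_inv p := by simp
  right_inv p := by simp

theorem ramanujanPsi_mul_expand_two :
    2 * (ramanujanPsi * expand 2 two_ne_zero ramanujanPsi) =
      expand 3 three_ne_zero (ramanujanPsi * ramanujanPhi) + psiDissection * phiDissection := by
  have h := nonnegProper_tri.add_prod nonnegProper_sq_add_self
  rw [mul_left_comm, ← countSeries_sq_add_self, ramanujanPsi,
    countSeries.mul_eq nonnegProper_tri nonnegProper_sq_add_self, ← countSeries.comp_equiv addSnd,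
    countSeries.int_prod_split 3 (h.comp_equiv addSnd), Finset.sum_range_succ,
    Finset.sum_range_succ, Finset.sum_range_one, phiDissection,
    psiDissection, ramanujanPhi, add_mul,
    countSeries.mul_eq nonnegProper_tri nonnegProper_sq,
    countSeries.mul_eq nonnegProper_pent₀ nonnegProper_omega,
    countSeries.mul_eq nonnegProper_pent₁ nonnegProper_omega, countSeries.expand_eq,
    ← add_assoc]
  congr 1
  · rw [add_comm]
    congr 1
    · exact countSeries.eq_of_equiv (shear (-2) (-1) 1) fun p ↦ by simp [shear, addSnd]; ring
    · exact countSeries.eq_of_equiv (shear (-2) 0 1) fun p ↦ by simp [shear, addSnd]; ring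
  · exact countSeries.eq_of_equiv (shear (-2) (-2) (-1)) fun p ↦ by simp [shear, addSnd]; ring

theorem ramanujanPsi_sq :
    ramanujanPsi ^ 2 = ramanujanPhi * expand 2 two_ne_zero ramanujanPsi := by
  have h := nonnegProper_tri.add_prod nonnegProper_tri
  have h2 := nonnegProper_tri.const_mul two_ne_zero
  rw [sq, ramanujanPsi, ramanujanPhi, countSeries.expand_eq,
    countSeries.mul_eq nonnegProper_tri nonnegProper_tri, ← countSeries.comp_equiv addSnd,
    countSeries.int_prod_split 2 (h.comp_equiv addSnd), countSeries.mul_eq nonnegProper_sq h2,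
    countSeries.int_prod_split 2 (nonnegProper_sq.add_prod h2)]
  simp only [Finset.sum_range_succ, Finset.sum_range_zero, zero_add]
  congr 1
  · exact countSeries.eq_of_equiv (shear (-1) 0 1) fun p ↦ by simp [shear, addSnd]; ring
  · exact countSeries.eq_of_equiv (shear (-1) (-1) (-1)) fun p ↦ by simp [shear, addSnd]; ring

theorem ramanujanPhi_eq_one_add : ∃ g : ℤ⟦X⟧, ramanujanPhi = 1 + 2 * g := by
  have hs (n : ℕ) : Finite {i : ℤ // i ^ 2 = n} := nonnegProper_sq.2 n
  have hN : ∀ n : ℕ, Finite {i : ℕ // ((i : ℤ)) ^ 2 = n} := fun n ↦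
    Finite.of_injective (β := {i : ℤ // i ^ 2 = n}) (fun k ↦ ⟨k.1, k.2⟩)
      fun a b h ↦ by simpa [Subtype.ext_iff] using h
  refine ⟨countSeries fun k : ℕ ↦ ((k : ℤ) + 1) ^ 2, ?_⟩
  have h0 : countSeries (fun _ : PUnit.{1} ↦ (0 : ℤ)) = 1 := by
    ext n
    simp only [countSeries, coeff_mk, coeff_one]
    split_ifs with h
    · simp [h]
    · have : IsEmpty {i : PUnit.{1} // (0 : ℤ) = n} := ⟨fun i ↦ h (by have := i.2; lia)⟩
      simp
  rw [ramanujanPhi, ← countSeries.comp_equiv Equiv.intEquivNatSumNat.symm,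
    countSeries.sum_type, two_mul, ← add_assoc]
  · congr 1
    · rw [← countSeries.comp_equiv Equiv.natEquivNatSumPUnit.symm, countSeries.sum_type, add_comm]
      · congr 1
      · intro n
        have := hN n
        exact Finite.of_injective (β := {i : ℕ // (i : ℤ) ^ 2 = n})
          (fun k ↦ ⟨Equiv.natEquivNatSumPUnit.symm k.1, k.2⟩)
          fun a b h ↦ by simpa [Subtype.ext_iff] using h
  · exact (nonnegProper_sq.comp_equiv _).2

theorem coeff_countSeries_eq_coeff_sum {ι : Type*} {f : ι → ℤ} (hf : ∀ i, 0 ≤ f i) {m : ℕ}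
    (s : Finset ι) (hs : ∀ i ∉ s, m < f i) :
    coeff m (countSeries f) = coeff m (∑ i ∈ s, (X : ℤ⟦X⟧) ^ (f i).toNat) := by
  classical
  simp only [countSeries, coeff_mk, map_sum, coeff_X_pow]
  rw [Finset.sum_boole, Nat.cast_inj]
  refine Nat.subtype_card _ fun i ↦ ?_
  rw [Finset.mem_filter]
  have := hf i
  have := hs i
  constructor
  · rintro ⟨-, h⟩
    lia
  · intro h
    refine ⟨by_contra fun hmem ↦ ?_, by lia⟩
    have := hs i hmem
    lia

/-- The factor `(1 - q ^ (2 j + 2)) / (1 - q ^ (2 j + 1))` of Gauss's product for `ψ`. -/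
noncomputable def gaussFactor (j : ℕ) : ℤ⟦X⟧ :=
  (1 - X ^ (2 * j + 2)) * invOfUnit (1 - X ^ (2 * j + 1)) 1

theorem gaussFactor_mul (j : ℕ) : gaussFactor j * (1 - X ^ (2 * j + 1)) = 1 - X ^ (2 * j + 2) := by
  rw [gaussFactor, mul_assoc, invOfUnit_mul _ _ (by simp), mul_one]

theorem one_sub_X_pow_succ_ne_zero (n : ℕ) : (1 - X ^ (n + 1) : ℤ⟦X⟧) ≠ 0 := fun h ↦ by
  simpa using congrArg constantCoeff h

/-- The finite sum in Shanks's identity. -/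
noncomputable def shanksSum (n : ℕ) : ℤ⟦X⟧ :=
  ∑ s ∈ Finset.range (n + 1), (∏ j ∈ Finset.Ico s n, gaussFactor j) * X ^ (s * (2 * n + 1))

theorem shanks_telescope {N r : ℕ} (hr : r ≤ N) :
    ∑ s ∈ Finset.range (r + 1), (∏ j ∈ Finset.Ico s N, gaussFactor j) *
        ((1 - X ^ (2 * N + 2)) * X ^ (s * (2 * N + 3)) -
          (1 - X ^ (2 * N + 1)) * X ^ (s * (2 * N + 1))) =
      (∏ j ∈ Finset.Ico r N, gaussFactor j) * X ^ ((r + 1) * (2 * N + 1)) *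
        (1 - X ^ (2 * r + 1)) := by
  induction r with
  | zero =>
    rw [zero_add, Finset.sum_range_one]
    ring
  | succ r ih =>
    rw [Finset.sum_range_succ, ih (by lia), Finset.prod_eq_prod_Ico_succ_bot (by lia)]
    linear_combination (∏ j ∈ Finset.Ico (r + 1) N, gaussFactor j) * X ^ ((r + 1) * (2 * N + 1)) *
      gaussFactor_mul r

theorem shanksSum_succ (n : ℕ) :
    shanksSum (n + 1) =
      shanksSum n + X ^ ((n + 1) * (2 * n + 1)) + X ^ ((n + 1) * (2 * n + 3)) := by
  apply mul_right_cancel₀ (one_sub_X_pow_succ_ne_zero (2 * n))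
  have h : (1 - X ^ (2 * n + 2)) * ∑ s ∈ Finset.range (n + 1),
        (∏ j ∈ Finset.Ico s n, gaussFactor j) * X ^ (s * (2 * n + 3)) -
      (1 - X ^ (2 * n + 1)) * shanksSum n =
        X ^ ((n + 1) * (2 * n + 1)) * (1 - X ^ (2 * n + 1)) := by
    have h := shanks_telescope le_rfl (N := n)
    rw [Finset.Ico_self, Finset.prod_empty, one_mul] at h
    rw [← h, shanksSum, Finset.mul_sum, Finset.mul_sum, ← Finset.sum_sub_distrib]
    exact Finset.sum_congr rfl fun s _ ↦ by ring
  rw [shanksSum, Finset.sum_range_succ, Finset.Ico_self, Finset.prod_empty, one_mul]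
  have hs : ∑ s ∈ Finset.range (n + 1), (∏ j ∈ Finset.Ico s (n + 1), gaussFactor j) *
      X ^ (s * (2 * (n + 1) + 1)) = gaussFactor n * ∑ s ∈ Finset.range (n + 1),
        (∏ j ∈ Finset.Ico s n, gaussFactor j) * X ^ (s * (2 * n + 3)) := by
    rw [Finset.mul_sum]
    refine Finset.sum_congr rfl fun s hs ↦ ?_
    rw [Finset.prod_Ico_succ_top (by grind)]
    ring
  rw [hs]
  linear_combination h + (∑ s ∈ Finset.range (n + 1),
        (∏ j ∈ Finset.Ico s n, gaussFactor j) * X ^ (s * (2 * n + 3))) * gaussFactor_mul n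

/-- **Shanks's identity**: a finite form of Gauss's product for `ψ`. -/
theorem shanksSum_eq (n : ℕ) :
    shanksSum n = ∑ k ∈ Finset.Icc (-n : ℤ) n, X ^ (2 * k ^ 2 + k).toNat := by
  induction n with
  | zero => simp [shanksSum]
  | succ n ih =>
    have h : Finset.Icc (-(n + 1 : ℕ) : ℤ) (n + 1 : ℕ) =
        insert (-(n + 1 : ℤ)) (insert (n + 1 : ℤ) (Finset.Icc (-n : ℤ) n)) := by
      ext k
      simp only [Finset.mem_insert, Finset.mem_Icc]
      lia
    rw [h, Finset.sum_insert (by simp; lia), Finset.sum_insert (by simp), ← ih, shanksSum_succ,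
      add_assoc, add_comm, add_assoc]
    congr 2
    · zify
      rw [Int.toNat_of_nonneg (by nlinarith)]
      ring
    · congr 2
      zify
      rw [Int.toNat_of_nonneg (by nlinarith)]
      ring

theorem coeff_prod_gaussFactor {m n : ℕ} (h : m < n) :
    coeff m (∏ j ∈ Finset.range n, gaussFactor j) = coeff m ramanujanPsi := by
  have h1 : coeff m (shanksSum n) = coeff m ramanujanPsi := by
    rw [shanksSum_eq, ramanujanPsi]
    refine (coeff_countSeries_eq_coeff_sum nonnegProper_tri.1 _ fun i hi ↦ ?_).symm
    rw [Finset.mem_Icc, not_and_or] at hi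
    rcases hi with hi | hi <;> nlinarith
  rw [← h1, shanksSum, Finset.sum_range_succ', map_add, map_sum, Finset.sum_eq_zero, zero_add,
    zero_mul, pow_zero, mul_one, Finset.range_eq_Ico]
  intro s _
  rw [coeff_mul_X_pow', if_neg]
  nlinarith

open scoped PowerSeries.WithPiTopology
open Filter Topology

/-- The generating function of `ped`. -/
noncomputable def pedSeries : ℤ⟦X⟧ := PowerSeries.mk fun n ↦ (ped n : ℤ)

theorem hasProd_mk_ped (R : Type*) [CommSemiring R] [TopologicalSpace R] [T2Space R]
    [IsTopologicalSemiring R] : HasProd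
    (fun i ↦ if Even (i + 1) then 1 + X ^ (i + 1) else ∑' j : ℕ, X ^ ((i + 1) * j))
    (PowerSeries.mk fun n ↦ (ped n : R)) := by
  convert! Nat.Partition.hasProd_genFun (fun i c ↦ if Even i → c ≤ 1 then (1 : R) else 0) using 1
  · ext1 i
    split_ifs with h
    · rw [tsum_eq_single 0]
      · simp
      · intro j hj
        simp [h, hj]
    · rw [tsum_eq_zero_add' ?_]
      · simp [h]
      simp_rw [pow_mul, pow_add]
      apply Summable.mul_right
      exact WithPiTopology.summable_pow_of_constantCoeff_eq_zero (by simp)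
  · simp_rw [Nat.Partition.genFun, ped, Fintype.card_subtype, Finset.card_filter, Finsupp.prod,
      Finset.prod_boole]
    simp

theorem tendsto_prod_pedSeries :
    Tendsto (fun n ↦ ∏ j ∈ Finset.range n,
      ((∑' i : ℕ, X ^ ((2 * j + 1) * i)) * (1 + X ^ (2 * j + 2)))) atTop (𝓝 pedSeries) := by
  have h := ((hasProd_mk_ped ℤ).tendsto_prod_nat).comp (tendsto_id.const_mul_atTop' two_pos)
  refine h.congr fun n ↦ ?_
  simp only [Function.comp, id]
  induction n with
  | zero => simp
  | succ n ih =>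
    rw [show 2 * (n + 1) = 2 * n + 1 + 1 from rfl, Finset.prod_range_succ, Finset.prod_range_succ,
      ih, Finset.prod_range_succ, if_neg (by grind), if_pos (by grind), mul_assoc]

theorem pedFactor_mul_evalNegHom_gaussFactor (j : ℕ) :
    (∑' i : ℕ, X ^ ((2 * j + 1) * i)) * (1 + X ^ (2 * j + 2)) * evalNegHom (gaussFactor j) =
      expand 2 two_ne_zero (gaussFactor j) := by
  have h1 : (∑' i : ℕ, X ^ ((2 * j + 1) * i)) * (1 - X ^ (2 * j + 1)) = (1 : ℤ⟦X⟧) := by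
    simp_rw [pow_mul]
    exact WithPiTopology.tsum_pow_mul_one_sub_of_constantCoeff_eq_zero (by simp)
  have h2 := congrArg (evalNegHom) (gaussFactor_mul j)
  have h3 := congrArg (expand 2 two_ne_zero) (gaussFactor_mul j)
  simp only [map_mul, map_sub, map_one, map_pow, evalNegHom_X, expand_X,
    (odd_two_mul_add_one j).neg_pow, Even.neg_pow (show Even (2 * j + 2) by grind),
    sub_neg_eq_add] at h2 h3
  have h4 : (1 - (X ^ 2) ^ (2 * j + 1) : ℤ⟦X⟧) ≠ 0 := by
    rw [← pow_mul]
    exact one_sub_X_pow_succ_ne_zero (2 * (2 * j) + 1)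
  apply mul_right_cancel₀ h4
  rw [h3]
  linear_combination (1 + X ^ (2 * j + 2)) * evalNegHom (gaussFactor j) * (1 + X ^ (2 * j + 1)) * h1
    + (1 + X ^ (2 * j + 2)) * h2

theorem pedSeries_mul_evalNegHom_ramanujanPsi :
    pedSeries * evalNegHom ramanujanPsi = expand 2 two_ne_zero ramanujanPsi := by
  have h1 : Tendsto (fun n ↦ evalNegHom (∏ j ∈ Finset.range n, gaussFactor j)) atTop
      (𝓝 (evalNegHom ramanujanPsi)) := by
    rw [WithPiTopology.tendsto_iff_coeff_tendsto]
    refine fun d ↦ tendsto_atTop_of_eventually_const (i₀ := d + 1) fun n hn ↦ ?_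
    rw [evalNegHom, coeff_rescale, coeff_rescale, coeff_prod_gaussFactor (by lia)]
  have h2 : Tendsto (fun n ↦ expand 2 two_ne_zero (∏ j ∈ Finset.range n, gaussFactor j)) atTop
      (𝓝 (expand 2 two_ne_zero ramanujanPsi)) := by
    rw [WithPiTopology.tendsto_iff_coeff_tendsto]
    refine fun d ↦ tendsto_atTop_of_eventually_const (i₀ := d + 1) fun n hn ↦ ?_
    rw [coeff_expand, coeff_expand]
    split_ifs
    · rw [coeff_prod_gaussFactor (by lia)]
    · rfl
  refine tendsto_nhds_unique ((tendsto_prod_pedSeries.mul h1).congr fun n ↦ ?_) h2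
  rw [map_prod, map_prod, ← Finset.prod_mul_distrib]
  exact Finset.prod_congr rfl fun j _ ↦ pedFactor_mul_evalNegHom_gaussFactor j

theorem constantCoeff_ramanujanPsi : constantCoeff ramanujanPsi = 1 := by
  rw [← coeff_zero_eq_constantCoeff_apply, ← coeff_prod_gaussFactor one_pos]
  simp [gaussFactor]

theorem evalNegHom_pedSeries_mul_ramanujanPhi :
    evalNegHom pedSeries * ramanujanPhi = ramanujanPsi := by
  have h := congrArg evalNegHom pedSeries_mul_evalNegHom_ramanujanPsi
  have h1 (f : ℤ⟦X⟧) : evalNegHom (evalNegHom f) = f := by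
    ext n
    simp [evalNegHom, coeff_rescale, ← mul_assoc, ← mul_pow]
  have h2 (f : ℤ⟦X⟧) : evalNegHom (expand 2 two_ne_zero f) = expand 2 two_ne_zero f := by
    ext n
    rw [evalNegHom, coeff_rescale, coeff_expand]
    split_ifs with hn
    · rw [(even_iff_two_dvd.mpr hn).neg_one_pow, one_mul]
    · rw [mul_zero]
  rw [map_mul, h1, h2] at h
  have h0 : ramanujanPsi ≠ 0 := fun h ↦ by simpa [h] using constantCoeff_ramanujanPsi
  apply mul_left_cancel₀ h0
  linear_combination ramanujanPhi * h - ramanujanPsi_sq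

/-- The terms of `f` with exponent congruent to `r` modulo `3`, divided by `X ^ r` and
contracted. -/
noncomputable def trisect {R : Type*} [CommRing R] (r : ℕ) (f : R⟦X⟧) : R⟦X⟧ :=
  PowerSeries.mk fun n ↦ coeff (3 * n + r) f

theorem coeff_trisect_sum {R : Type*} [CommRing R] (f g h : R⟦X⟧) (n : ℕ) :
    coeff n (expand 3 three_ne_zero f + X * expand 3 three_ne_zero g +
      X ^ 2 * expand 3 three_ne_zero h) =
    if n % 3 = 0 then coeff (n / 3) f else if n % 3 = 1 then coeff (n / 3) g
      else coeff (n / 3) h := by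
  rw [map_add, map_add, coeff_expand, ← pow_one (X : R⟦X⟧), ← pow_mul, coeff_X_pow_mul',
    coeff_X_pow_mul', coeff_expand, coeff_expand]
  have := Nat.mod_lt n three_pos
  have h3 := Nat.div_add_mod n 3
  generalize n / 3 = k at *
  generalize n % 3 = r at *
  subst h3
  interval_cases r
  · rw [if_pos (by lia : 3 ∣ 3 * k + 0), if_pos rfl]
    split_ifs <;> first | lia | simp
  · rw [if_neg (by lia : ¬ 3 ∣ 3 * k + 1), if_pos (by lia : 1 ≤ 3 * k + 1),
      if_pos (by lia : 3 ∣ 3 * k + 1 - 1), show (3 * k + 1 - 1) / 3 = k by lia,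
      if_neg one_ne_zero, if_pos rfl]
    split_ifs <;> first | lia | simp
  · rw [if_neg (by lia : ¬ 3 ∣ 3 * k + 2), if_neg (by lia : ¬ 3 ∣ 3 * k + 2 - 1),
      if_pos (by lia : 1 * 2 ≤ 3 * k + 2), if_pos (by lia : 3 ∣ 3 * k + 2 - 1 * 2),
      show (3 * k + 2 - 1 * 2) / 3 = k by lia, if_neg two_ne_zero, if_neg (by lia : ¬ 2 = 1)]
    simp

theorem eq_trisect {R : Type*} [CommRing R] (f : R⟦X⟧) :
    f = expand 3 three_ne_zero (trisect 0 f) + X * expand 3 three_ne_zero (trisect 1 f) +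
      X ^ 2 * expand 3 three_ne_zero (trisect 2 f) := by
  ext n
  rw [coeff_trisect_sum]
  simp only [trisect, coeff_mk]
  have := Nat.mod_lt n three_pos
  split_ifs <;> congr 2 <;> lia

theorem trisect_one_eq {R : Type*} [CommRing R] {f f₀ f₁ f₂ : R⟦X⟧}
    (h : f = expand 3 three_ne_zero f₀ + X * expand 3 three_ne_zero f₁ +
      X ^ 2 * expand 3 three_ne_zero f₂) : trisect 1 f = f₁ := by
  ext n
  rw [trisect, coeff_mk, h, coeff_trisect_sum, if_neg (by lia), if_pos (by lia),
    show (3 * n + 1) / 3 = n by lia]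

section Reduction

variable (N : ℕ)

/-- Reduction of coefficients modulo `N`. -/
noncomputable abbrev reduce : ℤ⟦X⟧ →+* (ZMod N)⟦X⟧ := PowerSeries.map (Int.castRingHom (ZMod N))

theorem reduce_expand {p : ℕ} (hp : p ≠ 0) (f : ℤ⟦X⟧) :
    reduce N (expand p hp f) = expand p hp (reduce N f) :=
  map_expand p hp _ f

theorem dvd_ped_of_coeff_trisect_eq_zero {n : ℕ}
    (h : coeff (3 * n + 2) (trisect 1 (reduce N (evalNegHom pedSeries))) = 0) :
    N ∣ ped (9 * n + 7) := by
  rw [trisect, coeff_mk, coeff_map, evalNegHom, coeff_rescale, pedSeries, coeff_mk] at h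
  rw [show 3 * (3 * n + 2) + 1 = 9 * n + 7 by ring] at h
  rcases neg_one_pow_eq_or ℤ (9 * n + 7) with h1 | h1 <;>
  · rw [h1] at h
    simpa [ZMod.natCast_eq_zero_iff] using h

end Reduction

theorem four_dvd_ped (n : ℕ) : 4 ∣ ped (9 * n + 7) := by
  apply dvd_ped_of_coeff_trisect_eq_zero
  have hφ := congrArg (reduce 4) ramanujanPhi_dissection
  have hψ := congrArg (reduce 4) ramanujanPsi_dissection
  have hψψ := congrArg (reduce 4) ramanujanPsi_mul_expand_two
  have hψ2 := congrArg (reduce 4) ramanujanPsi_sq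
  have hF := congrArg (reduce 4) evalNegHom_pedSeries_mul_ramanujanPhi
  obtain ⟨g, hg⟩ := ramanujanPhi_eq_one_add
  replace hg := congrArg (reduce 4) hg
  have h4 : (4 : (ZMod 4)⟦X⟧) = 0 := by
    rw [← map_ofNat (C (R := ZMod 4)), show (4 : ZMod 4) = 0 from rfl, map_zero]
  simp only [map_mul, map_add, map_one, map_pow, map_ofNat, reduce_expand,
    show reduce 4 X = X from map_X _] at hφ hψ hψψ hψ2 hF hg
  generalize reduce 4 (evalNegHom pedSeries) = F at *
  generalize reduce 4 ramanujanPhi = φ at *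
  generalize reduce 4 ramanujanPsi = ψ at *
  generalize reduce 4 phiDissection = b at *
  generalize reduce 4 psiDissection = A at *
  generalize reduce 4 g = g at *
  rw [trisect_one_eq (f₀ := A * expand 3 three_ne_zero φ)
    (f₁ := -expand 3 three_ne_zero (ψ * φ)) (f₂ := 2 * expand 3 three_ne_zero ψ * b),
    map_neg, coeff_expand_of_not_dvd _ _ _ (by lia), neg_zero]
  have h1 : φ ^ 2 = 1 := by
    rw [hg]
    linear_combination (g + g ^ 2) * h4
  have h2 : F = ψ * φ := by linear_combination φ * hF - F * h1
  have h3 : -expand 3 three_ne_zero (ψ * φ) =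
      expand 3 three_ne_zero ψ * expand 3 three_ne_zero φ + 2 * A * b := by
    rw [map_mul]
    linear_combination 2 * hψψ - ψ * expand 2 two_ne_zero ψ * h4
  rw [h2, h3]
  simp only [map_mul, map_add, map_ofNat]
  nth_rw 1 [hφ]
  nth_rw 1 [hψ]
  ring

theorem three_dvd_ped (n : ℕ) : 3 ∣ ped (9 * n + 7) := by
  apply dvd_ped_of_coeff_trisect_eq_zero
  have hφ := congrArg (reduce 3) ramanujanPhi_dissection
  have hψ := congrArg (reduce 3) ramanujanPsi_dissection
  have hψψ := congrArg (reduce 3) ramanujanPsi_mul_expand_two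
  have hψ2 := congrArg (reduce 3) ramanujanPsi_sq
  have hF := congrArg (reduce 3) evalNegHom_pedSeries_mul_ramanujanPhi
  have h3 : (3 : (ZMod 3)⟦X⟧) = 0 := by
    rw [← map_ofNat (C (R := ZMod 3)), show (3 : ZMod 3) = 0 from rfl, map_zero]
  have hfrob (f : (ZMod 3)⟦X⟧) : expand 3 three_ne_zero f = f ^ 3 := by
    rw [← MvPowerSeries.map_frobenius_expand 3 three_ne_zero, ZMod.frobenius_zmod,
      MvPowerSeries.map_id]
    rfl
  have h0 : reduce 3 ramanujanPhi ≠ 0 := by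
    intro h
    have hψ0 : reduce 3 ramanujanPsi = 0 := by
      rw [← evalNegHom_pedSeries_mul_ramanujanPhi, map_mul, h, mul_zero]
    have := congrArg (coeff 0) hψ0
    rw [coeff_map, coeff_zero_eq_constantCoeff_apply, constantCoeff_ramanujanPsi] at this
    simp at this
  simp only [map_mul, map_add, map_pow, map_ofNat, reduce_expand,
    show reduce 3 X = X from map_X _] at hφ hψ hψψ hψ2 hF
  generalize reduce 3 (evalNegHom pedSeries) = F at *
  generalize reduce 3 ramanujanPhi = φ at *
  generalize reduce 3 ramanujanPsi = ψ at *
  generalize reduce 3 phiDissection = b at *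
  generalize reduce 3 psiDissection = A at *
  have hU : trisect 1 F = 2 * expand 3 three_ne_zero ψ * φ := by
    have h1 := congrArg (trisect 1) (show F * φ ^ 3 = ψ * φ ^ 2 by linear_combination φ ^ 2 * hF)
    rw [trisect_one_eq (f₀ := trisect 0 F * φ) (f₁ := trisect 1 F * φ) (f₂ := trisect 2 F * φ),
      trisect_one_eq (f := ψ * φ ^ 2)
      (f₀ := A * expand 3 three_ne_zero φ ^ 2 + 4 * X * (expand 3 three_ne_zero ψ * b ^ 2))
      (f₁ := expand 3 three_ne_zero ψ * expand 3 three_ne_zero φ ^ 2 +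
        4 * (A * expand 3 three_ne_zero φ * b))
      (f₂ := 4 * A * b ^ 2 + 4 * expand 3 three_ne_zero ψ * expand 3 three_ne_zero φ * b)] at h1
    · have hφ3 := hfrob φ
      have hψ3 := hfrob ψ
      apply mul_left_cancel₀ (pow_ne_zero 3 h0)
      linear_combination φ ^ 2 * h1 - 4 * expand 3 three_ne_zero φ * φ ^ 2 * hψψ
        - φ ^ 2 * expand 3 three_ne_zero ψ * expand 3 three_ne_zero φ ^ 2 * h3
        - 8 * φ * expand 3 three_ne_zero φ * ψ * hψ2 + 8 * φ * ψ ^ 3 * hφ3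
        - 2 * φ ^ 4 * hψ3 + 2 * φ ^ 4 * ψ ^ 3 * h3
    · nth_rw 1 [hφ]
      nth_rw 1 [hψ]
      simp only [map_mul, map_add, map_ofNat, map_pow, expand_X]
      ring
    · rw [← hfrob]
      nth_rw 1 [eq_trisect F]
      simp only [map_mul]
      ring
  have h2 : trisect 1 F = expand 3 three_ne_zero (2 * ψ * expand 3 three_ne_zero φ) +
      X * expand 3 three_ne_zero (4 * ψ * b) + X ^ 2 * expand 3 three_ne_zero 0 := by
    rw [hU]
    nth_rw 1 [hφ]
    simp only [map_mul, map_ofNat, map_zero]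
    ring
  rw [h2, coeff_trisect_sum, if_neg (by lia), if_neg (by lia), map_zero]

end GeneratingFunctions

theorem ped_9n_add_7_mod_12 (n : ℕ) : ped (9 * n + 7) ≡ 0 [MOD 12] := by
  exact (Nat.modEq_zero_iff_dvd).mpr <|
    Nat.Coprime.mul_dvd_of_dvd_of_dvd
      (by decide : Nat.Coprime 3 4) (three_dvd_ped n) (four_dvd_ped n)
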